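/- Let d ≥ 1, let 0 ≤ k ≤ d be an integer, and let α = (α_1,…,α_d) be a multi-index with α_j > −1 for j = 1,…,k and α_j > −1/2 for j = k+1,…,d. There exists a constant C > 0, depending only on α, d and k, such that for every t > 0 and every x ∈ (0,∞)^d, the integral of |∂p_t^α(x,y)/∂t| over the mixed region G_t(x) = { y ∈ (0,∞)^d : √(e^{−t} x_j y_j) ≤ 1 − e^{−t} for j = 1,…,k and √(e^{−t} x_j y_j) > 1 − e^{−t} for j = k+1,…,d } satisfies ∫_{G_t(x)} |∂p_t^α(x,y)/∂t| dy ≤ C/t. -/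

import Mathlib

open MeasureTheory Real Set

noncomputable def besselI (ν z : ℝ) : ℝ :=
  ∑' m : ℕ, (z / 2) ^ (2 * (m : ℝ) + ν) / (Nat.factorial m * Real.Gamma ((m : ℝ) + ν + 1))

/-- The positive orthant `(0,∞)^d`. -/
def posOrthant (d : ℕ) : Set (Fin d → ℝ) := Set.univ.pi fun _ => Set.Ioi 0

/-- The Poisson–Laguerre kernel `p_t^α(x,y)`. -/
noncomputable def plKernel (d : ℕ) (α : Fin d → ℝ) (t : ℝ) (x y : Fin d → ℝ) : ℝ :=
  (1 / (2 * Real.sqrt π)) *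
    ∫ r in Set.Ioo (0 : ℝ) 1,
      (t * Real.exp (t ^ 2 / (4 * Real.log r)) /
          ((1 - r) ^ d * (-Real.log r) ^ ((3 : ℝ) / 2))) *
        (∏ j, (y j / x j) ^ (α j / 2) *
            Real.exp (-((r * x j + y j) / (1 - r)) - α j * Real.log r / 2) *
            besselI (α j) (2 * Real.sqrt (r * x j * y j) / (1 - r))) / r

/-- The Poisson–Laguerre semigroup `P_t^α f`, with the convention `P_0^α f = f`. -/
noncomputable def plP (d : ℕ) (α : Fin d → ℝ) (t : ℝ)
    (f : (Fin d → ℝ) → ℝ) (x : Fin d → ℝ) : ℝ :=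
  if t = 0 then f x else ∫ y in posOrthant d, plKernel d α t x y * f y

/-! The kernel `p_t^α` is the heat kernel of the Laguerre semigroup at time `s = -log r`,
subordinated by the Lévy density `t / (2√π) s^{-3/2} e^{-t²/(4s)}`. The Laguerre heat kernel is a
product of Poisson mixtures of gamma densities, so it has total mass one in `y`, and it remains to
bound the `L¹` norm in `s` of the `t`-derivative of the Lévy density. Replacing `1 - t²/(2s)` by
`1 + t²/(2s)` in that derivative gives a majorant whose integral is a sum of two Gamma values, equal
to `2 / t`; the resulting estimate holds on the whole orthant. -/

section InverseGamma

variable {a c : ℝ}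

lemma integral_rpow_mul_exp_neg_div_Ioi (ha : 0 < a) (hc : 0 < c) :
    ∫ s in Ioi (0 : ℝ), s ^ (-a - 1) * exp (-(c / s)) = (1 / c) ^ a * Gamma a := by
  rw [← integral_rpow_mul_exp_neg_mul_Ioi ha hc,
    ← integral_comp_rpow_Ioi (fun s => s ^ (a - 1) * exp (-(c * s))) (neg_ne_zero.2 one_ne_zero)]
  refine setIntegral_congr_fun measurableSet_Ioi fun s (hs : 0 < s) => ?_
  have hpow : s ^ (-a - 1) = s ^ (-1 - 1 : ℝ) * s⁻¹ ^ (a - 1) := by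
    rw [inv_rpow hs.le, ← rpow_neg hs.le, ← rpow_add hs]
    ring_nf
  simp only [abs_neg, abs_one, one_mul, smul_eq_mul, rpow_neg_one, div_eq_mul_inv, hpow, mul_assoc]

lemma integrableOn_rpow_mul_exp_neg_div_Ioi (ha : 0 < a) (hc : 0 < c) :
    IntegrableOn (fun s => s ^ (-a - 1) * exp (-(c / s))) (Ioi 0) :=
  .of_integral_ne_zero <| by
    rw [integral_rpow_mul_exp_neg_div_Ioi ha hc]
    positivity

end InverseGamma

section LevyDensity

variable {s t u τ c : ℝ}

/-- The density `t / (2√π) s^{-3/2} e^{-t²/(4s)}` of the one-sided `1/2`-stable (Lévy) law, which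
subordinates a Poisson semigroup at time `t` to the heat semigroup at time `s`. -/
noncomputable def levyDensity (t s : ℝ) : ℝ :=
  t / (2 * √π) * s ^ (-(3 / 2) : ℝ) * exp (-(t ^ 2 / (4 * s)))

/-- The partial derivative of `levyDensity` in its first argument `t`. -/
noncomputable def levyDensityDeriv (t s : ℝ) : ℝ :=
  (1 - t ^ 2 / (2 * s)) / (2 * √π) * s ^ (-(3 / 2) : ℝ) * exp (-(t ^ 2 / (4 * s)))

/-- The majorant of `|levyDensityDeriv t s|` obtained by adding the two terms of `1 - t² / (2s)`
instead of subtracting them. -/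
noncomputable def levyDensityMajorant (t s : ℝ) : ℝ :=
  (1 + t ^ 2 / (2 * s)) / (2 * √π) * s ^ (-(3 / 2) : ℝ) * exp (-(t ^ 2 / (4 * s)))

@[fun_prop]
lemma measurable_levyDensity (t : ℝ) : Measurable (levyDensity t) := by
  unfold levyDensity
  fun_prop

@[fun_prop]
lemma measurable_levyDensityDeriv (t : ℝ) : Measurable (levyDensityDeriv t) := by
  unfold levyDensityDeriv
  fun_prop

@[fun_prop]
lemma measurable_levyDensityMajorant (t : ℝ) : Measurable (levyDensityMajorant t) := by
  unfold levyDensityMajorant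
  fun_prop

lemma hasDerivAt_levyDensity (t s : ℝ) :
    HasDerivAt (levyDensity · s) (levyDensityDeriv t s) t := by
  unfold levyDensity levyDensityDeriv
  have hexp := (((hasDerivAt_id' t).fun_pow 2).div_const (4 * s)).fun_neg.exp
  refine ((((hasDerivAt_id' t).div_const (2 * √π)).mul_const _).fun_mul hexp).congr_deriv ?_
  norm_num
  ring

lemma levyDensityMajorant_nonneg (t : ℝ) (hs : 0 < s) : 0 ≤ levyDensityMajorant t s := by
  unfold levyDensityMajorant
  positivity

lemma abs_levyDensityDeriv_le (t : ℝ) (hs : 0 < s) :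
    |levyDensityDeriv t s| ≤ levyDensityMajorant t s := by
  have h : |1 - t ^ 2 / (2 * s)| ≤ 1 + t ^ 2 / (2 * s) := by
    refine (abs_sub _ _).trans_eq ?_
    rw [abs_one, abs_of_nonneg (by positivity)]
  unfold levyDensityDeriv levyDensityMajorant
  rw [abs_mul, abs_mul, abs_div, abs_exp, abs_of_nonneg (rpow_nonneg hs.le _),
    abs_of_nonneg (by positivity : 0 ≤ 2 * √π)]
  gcongr

lemma abs_levyDensity_le (t : ℝ) (hs : 0 < s) :
    |levyDensity t s| ≤ |t| * levyDensityMajorant t s := by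
  have h : levyDensity t s =
      t * (1 / (2 * √π) * s ^ (-(3 / 2) : ℝ) * exp (-(t ^ 2 / (4 * s)))) := by
    unfold levyDensity
    ring
  rw [h, abs_mul, abs_of_nonneg (a := 1 / (2 * √π) * _ * _) (by positivity)]
  unfold levyDensityMajorant
  gcongr
  exact le_add_of_nonneg_right (by positivity)

lemma levyDensityMajorant_le_sq_mul (hs : 0 < s) (hτ : 0 < τ) (hτu : τ ≤ u) (huc : u ≤ c * τ) :
    levyDensityMajorant u s ≤ c ^ 2 * levyDensityMajorant τ s := by
  have hu : 0 ≤ u := hτ.le.trans hτu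
  have hc : 1 ≤ c ^ 2 := one_le_pow₀ (le_of_mul_le_mul_right (by linarith) hτ)
  have hpoly : 1 + u ^ 2 / (2 * s) ≤ c ^ 2 * (1 + τ ^ 2 / (2 * s)) :=
    calc 1 + u ^ 2 / (2 * s) ≤ c ^ 2 + (c * τ) ^ 2 / (2 * s) := by gcongr
      _ = c ^ 2 * (1 + τ ^ 2 / (2 * s)) := by ring
  unfold levyDensityMajorant
  calc _ ≤ c ^ 2 * (1 + τ ^ 2 / (2 * s)) / (2 * √π) * s ^ (-(3 / 2) : ℝ) *
        exp (-(τ ^ 2 / (4 * s))) := by gcongr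
    _ = _ := by ring

lemma levyDensityMajorant_eq_add (t : ℝ) (hs : 0 < s) :
    levyDensityMajorant t s =
      1 / (2 * √π) * (s ^ (-(1 / 2) - 1 : ℝ) * exp (-(t ^ 2 / 4 / s))) +
        t ^ 2 / (4 * √π) * (s ^ (-(3 / 2) - 1 : ℝ) * exp (-(t ^ 2 / 4 / s))) := by
  have hpow : s ^ (-(3 / 2) - 1 : ℝ) = s ^ (-(3 / 2) : ℝ) / s := rpow_sub_one hs.ne' _
  rw [levyDensityMajorant, hpow, div_div, show (-(1 / 2) - 1 : ℝ) = -(3 / 2) by norm_num]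
  ring

lemma integrableOn_levyDensityMajorant (ht : 0 < t) :
    IntegrableOn (levyDensityMajorant t) (Ioi 0) := by
  have hc : 0 < t ^ 2 / 4 := by positivity
  exact IntegrableOn.congr_fun
    (((integrableOn_rpow_mul_exp_neg_div_Ioi one_half_pos hc).const_mul _).add
      ((integrableOn_rpow_mul_exp_neg_div_Ioi (by norm_num) hc).const_mul _))
    (fun s hs => (levyDensityMajorant_eq_add t hs).symm) measurableSet_Ioi

lemma integral_levyDensityMajorant (ht : 0 < t) :
    ∫ s in Ioi (0 : ℝ), levyDensityMajorant t s = 2 / t := by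
  have hc : 0 < t ^ 2 / 4 := by positivity
  have hsqrt : (1 / (t ^ 2 / 4)) ^ (1 / 2 : ℝ) = 2 / t := by
    rw [← sqrt_eq_rpow, sqrt_eq_iff_mul_self_eq (by positivity) (by positivity)]
    ring
  have hcube : (1 / (t ^ 2 / 4)) ^ (3 / 2 : ℝ) = (4 / t ^ 2) * (2 / t) := by
    rw [← hsqrt, show (3 / 2 : ℝ) = 1 + 1 / 2 by norm_num, rpow_add (by positivity), rpow_one,
      one_div_div]
  have hGamma : Gamma (3 / 2) = 1 / 2 * √π := by
    rw [← Gamma_one_half_eq, ← Gamma_add_one one_half_pos.ne']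
    norm_num
  rw [setIntegral_congr_fun measurableSet_Ioi fun s hs => levyDensityMajorant_eq_add t hs,
    integral_add ((integrableOn_rpow_mul_exp_neg_div_Ioi one_half_pos hc).const_mul _)
      ((integrableOn_rpow_mul_exp_neg_div_Ioi (by norm_num) hc).const_mul _),
    integral_const_mul, integral_const_mul, integral_rpow_mul_exp_neg_div_Ioi one_half_pos hc,
    integral_rpow_mul_exp_neg_div_Ioi (by norm_num) hc, hsqrt, hcube, Gamma_one_half_eq, hGamma]
  field_simp
  norm_num

end LevyDensity

section Subordination

variable {t A : ℝ}

lemma hasDerivAt_integral_levyDensity_mul (ht : 0 < t) {k : ℝ → ℝ}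
    (hk : AEStronglyMeasurable k (volume.restrict (Ioi 0)))
    (hint : IntegrableOn (fun s => levyDensityMajorant (t / 2) s * k s) (Ioi 0)) :
    HasDerivAt (fun u => ∫ s in Ioi (0 : ℝ), levyDensity u s * k s)
      (∫ s in Ioi (0 : ℝ), levyDensityDeriv t s * k s) t := by
  have hmajorant : ∀ s > 0, ∀ u ∈ Metric.ball t (t / 2),
      levyDensityMajorant u s * |k s| ≤ 9 * |levyDensityMajorant (t / 2) s * k s| := by
    intro s hs u hu
    rw [Metric.mem_ball, Real.dist_eq, abs_lt] at hu
    have h := levyDensityMajorant_le_sq_mul (c := 3) hs (half_pos ht)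
      (by linarith : t / 2 ≤ u) (by linarith)
    rw [abs_mul, abs_of_nonneg (levyDensityMajorant_nonneg _ hs), ← mul_assoc]
    gcongr
    linarith
  have ht_mem := Metric.mem_ball_self (x := t) (half_pos ht)
  have hbound : IntegrableOn (fun s => 9 * |levyDensityMajorant (t / 2) s * k s|) (Ioi 0) :=
    hint.abs.const_mul 9
  refine (hasDerivAt_integral_of_dominated_loc_of_deriv_le
    (F := fun u s => levyDensity u s * k s) (F' := fun u s => levyDensityDeriv u s * k s)
    (Metric.ball_mem_nhds t (half_pos ht)) (.of_forall fun u => ?_)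
    ((hbound.const_mul |t|).mono' ?_ ?_) ?_ ?_ hbound ?_).2
  · exact (measurable_levyDensity u).aestronglyMeasurable.mul hk
  · exact (measurable_levyDensity t).aestronglyMeasurable.mul hk
  · filter_upwards [ae_restrict_mem measurableSet_Ioi] with s hs
    calc ‖levyDensity t s * k s‖ ≤ |t| * levyDensityMajorant t s * |k s| := by
          rw [norm_eq_abs, abs_mul]
          gcongr
          exact abs_levyDensity_le t hs
      _ ≤ |t| * (9 * |levyDensityMajorant (t / 2) s * k s|) := by
          rw [mul_assoc]
          exact mul_le_mul_of_nonneg_left (hmajorant s hs t ht_mem) (abs_nonneg t)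
  · exact (measurable_levyDensityDeriv t).aestronglyMeasurable.mul hk
  · filter_upwards [ae_restrict_mem measurableSet_Ioi] with s hs u hu
    refine le_trans ?_ (hmajorant s hs u hu)
    rw [norm_eq_abs, abs_mul]
    gcongr
    exact abs_levyDensityDeriv_le u hs
  · exact .of_forall fun s u _ => (hasDerivAt_levyDensity u s).mul_const (k s)

variable {Y : Type*} [MeasurableSpace Y] {ν : Measure Y} [SFinite ν] {K : ℝ → Y → ℝ}
  (ht : 0 < t)
  (hK : AEStronglyMeasurable (fun p : ℝ × Y => K p.1 p.2) ((volume.restrict (Ioi 0)).prod ν))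
  (hKint : ∀ s > 0, Integrable (K s) ν) (hKA : ∀ s > 0, ∫ y, |K s y| ∂ν ≤ A)

include ht hK hKint hKA

lemma integrable_levyDensityMajorant_mul :
    Integrable (fun p : ℝ × Y => levyDensityMajorant t p.1 * K p.1 p.2)
      ((volume.restrict (Ioi 0)).prod ν) := by
  have hmeas : AEStronglyMeasurable (fun p : ℝ × Y => levyDensityMajorant t p.1 * K p.1 p.2)
      ((volume.restrict (Ioi 0)).prod ν) :=
    ((measurable_levyDensityMajorant t).comp measurable_fst).aestronglyMeasurable.mul hK
  refine (integrable_prod_iff hmeas).2 ⟨?_, ?_⟩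
  · filter_upwards [ae_restrict_mem measurableSet_Ioi] with s hs
    exact (hKint s hs).const_mul _
  · refine ((integrableOn_levyDensityMajorant ht).mul_const A).mono'
      hmeas.norm.integral_prod_right' ?_
    filter_upwards [ae_restrict_mem measurableSet_Ioi] with s hs
    have hM := levyDensityMajorant_nonneg t hs
    simp only [norm_mul, integral_const_mul, norm_eq_abs, abs_of_nonneg hM]
    rw [abs_of_nonneg (integral_nonneg fun _ => abs_nonneg _)]
    exact mul_le_mul_of_nonneg_left (hKA s hs) hM

lemma integrable_levyDensityDeriv_mul :
    Integrable (fun p : ℝ × Y => levyDensityDeriv t p.1 * K p.1 p.2)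
      ((volume.restrict (Ioi 0)).prod ν) := by
  refine (integrable_levyDensityMajorant_mul ht hK hKint hKA).mono
    (((measurable_levyDensityDeriv t).comp measurable_fst).aestronglyMeasurable.mul hK) ?_
  filter_upwards [Measure.quasiMeasurePreserving_fst.ae
    (ae_restrict_mem (μ := volume) measurableSet_Ioi)] with p hp
  rw [norm_mul, norm_mul, norm_of_nonneg (levyDensityMajorant_nonneg t hp)]
  gcongr
  exact abs_levyDensityDeriv_le t hp

lemma ae_hasDerivAt_integral_levyDensity_mul :
    ∀ᵐ y ∂ν, HasDerivAt (fun u => ∫ s in Ioi (0 : ℝ), levyDensity u s * K s y)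
      (∫ s in Ioi (0 : ℝ), levyDensityDeriv t s * K s y) t := by
  filter_upwards [(integrable_levyDensityMajorant_mul (half_pos ht) hK hKint hKA).prod_left_ae,
    hK.prod_swap.prodMk_left] with y hint hmeas
  exact hasDerivAt_integral_levyDensity_mul ht hmeas hint

lemma integral_abs_integral_levyDensityDeriv_mul_le :
    ∫ y, |∫ s in Ioi (0 : ℝ), levyDensityDeriv t s * K s y| ∂ν ≤ 2 / t * A := by
  have hint := integrable_levyDensityDeriv_mul ht hK hKint hKA
  calc ∫ y, |∫ s in Ioi (0 : ℝ), levyDensityDeriv t s * K s y| ∂ν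
    _ ≤ ∫ y, (∫ s in Ioi (0 : ℝ), |levyDensityDeriv t s * K s y|) ∂ν :=
        integral_mono hint.integral_prod_right.abs hint.abs.integral_prod_right
          fun y => abs_integral_le_integral_abs
    _ = ∫ s in Ioi (0 : ℝ), (∫ y, |levyDensityDeriv t s * K s y| ∂ν) :=
        (integral_integral_swap hint.abs).symm
    _ ≤ ∫ s in Ioi (0 : ℝ), levyDensityMajorant t s * A := by
        refine setIntegral_mono_on hint.abs.integral_prod_left
          ((integrableOn_levyDensityMajorant ht).mul_const A) measurableSet_Ioi fun s hs => ?_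
        simp only [abs_mul, integral_const_mul]
        exact mul_le_mul (abs_levyDensityDeriv_le t hs) (hKA s hs)
          (integral_nonneg fun _ => abs_nonneg _) (levyDensityMajorant_nonneg t hs)
    _ = 2 / t * A := by rw [integral_mul_const, integral_levyDensityMajorant ht]

theorem integrable_deriv_integral_levyDensity_mul :
    Integrable (fun y => deriv (fun u => ∫ s in Ioi (0 : ℝ), levyDensity u s * K s y) t) ν := by
  refine (integrable_levyDensityDeriv_mul ht hK hKint hKA).integral_prod_right.congr ?_
  filter_upwards [ae_hasDerivAt_integral_levyDensity_mul ht hK hKint hKA] with y hy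
  exact hy.deriv.symm

theorem integral_abs_deriv_integral_levyDensity_mul_le :
    ∫ y, |deriv (fun u => ∫ s in Ioi (0 : ℝ), levyDensity u s * K s y) t| ∂ν ≤ 2 / t * A := by
  refine (integral_congr_ae ?_).trans_le
    (integral_abs_integral_levyDensityDeriv_mul_le ht hK hKint hKA)
  filter_upwards [ae_hasDerivAt_integral_levyDensity_mul ht hK hKint hKA] with y hy
  rw [hy.deriv]

end Subordination

section LaguerreHeatFactor

variable {a x r y : ℝ}

/-- The one-dimensional Laguerre heat kernel with parameter `a`, at time `s = -log r`, as a function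
of `x` and `y`. The factor `(1 - r)⁻¹`, which `plKernel` collects into `(1 - r) ^ d`, is included so
that the total mass in `y` is one. -/
noncomputable def laguerreHeatFactor (a x r y : ℝ) : ℝ :=
  (1 - r)⁻¹ * ((y / x) ^ (a / 2) * exp (-((r * x + y) / (1 - r)) - a * log r / 2) *
    besselI a (2 * √(r * x * y) / (1 - r)))

@[fun_prop]
lemma measurable_besselI (ν : ℝ) : Measurable (besselI ν) :=
  Measurable.tsum fun m => by fun_prop

lemma measurable_laguerreHeatFactor {Z : Type*} [MeasurableSpace Z] {f g : Z → ℝ} (a x : ℝ)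
    (hf : Measurable f) (hg : Measurable g) :
    Measurable fun z => laguerreHeatFactor a x (f z) (g z) := by
  unfold laguerreHeatFactor
  fun_prop

lemma integral_gammaPDFReal_Ioi {b q : ℝ} (hb : 0 < b) (hq : 0 < q) :
    ∫ y in Ioi (0 : ℝ), ProbabilityTheory.gammaPDFReal b q y = 1 := by
  have hpdf : EqOn (ProbabilityTheory.gammaPDFReal b q)
      (fun y => q ^ b / Gamma b * (y ^ (b - 1) * exp (-(q * y)))) (Ioi 0) := by
    intro y (hy : 0 < y)
    simp only [ProbabilityTheory.gammaPDFReal, if_pos hy.le, mul_assoc]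
  rw [setIntegral_congr_fun measurableSet_Ioi hpdf, integral_const_mul,
    integral_rpow_mul_exp_neg_mul_Ioi hb hq, one_div, inv_rpow hq.le]
  field_simp [(Gamma_pos_of_pos hb).ne']

lemma integrableOn_gammaPDFReal_Ioi {b q : ℝ} (hb : 0 < b) (hq : 0 < q) :
    IntegrableOn (ProbabilityTheory.gammaPDFReal b q) (Ioi 0) :=
  .of_integral_ne_zero <| by
    rw [integral_gammaPDFReal_Ioi hb hq]
    exact one_ne_zero

lemma rpow_half_mul_exp_mul_sqrt_div_rpow {q : ℝ} (hx : 0 < x) (hr : 0 < r) (hy : 0 < y)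
    (hq : 0 < q) (a b : ℝ) :
    (y / x) ^ (a / 2) * exp (-(a * log r / 2)) * (√(r * x * y) / q) ^ (2 * b + a) =
      (r * x / q) ^ b * (y / q) ^ (b + a) := by
  have hlog : log √(r * x * y) = (log r + log x + log y) / 2 := by
    rw [log_sqrt (by positivity), log_mul (by positivity) hy.ne', log_mul hr.ne' hx.ne']
  simp only [rpow_def_of_pos (by positivity : 0 < y / x), rpow_def_of_pos (div_pos hy hq),
    rpow_def_of_pos (by positivity : 0 < √(r * x * y) / q),
    rpow_def_of_pos (by positivity : 0 < r * x / q), ← exp_add]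
  rw [log_div hy.ne' hx.ne', log_div (by positivity) hq.ne', log_div hy.ne' hq.ne',
    log_div (by positivity) hq.ne', hlog, log_mul hr.ne' hx.ne']
  ring_nf

lemma laguerreHeatFactor_eq_tsum (a : ℝ) (hx : 0 < x) (hr : r ∈ Ioo (0 : ℝ) 1) (hy : 0 < y) :
    laguerreHeatFactor a x r y = ∑' m : ℕ,
      exp (-(r * x / (1 - r))) * (r * x / (1 - r)) ^ m / m.factorial *
        ProbabilityTheory.gammaPDFReal (m + a + 1) (1 - r)⁻¹ y := by
  have hq : 0 < 1 - r := sub_pos.2 hr.2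
  unfold laguerreHeatFactor besselI
  rw [← tsum_mul_left, ← tsum_mul_left]
  refine tsum_congr fun m => ?_
  have hpow := rpow_half_mul_exp_mul_sqrt_div_rpow hx hr.1 hy hq a m
  have hexp : exp (-((r * x + y) / (1 - r)) - a * log r / 2) =
      exp (-(r * x / (1 - r))) * exp (-((1 - r)⁻¹ * y)) * exp (-(a * log r / 2)) := by
    rw [← exp_add, ← exp_add]
    ring_nf
  have hgamma : (1 - r)⁻¹ ^ (m + a + 1) * y ^ (m + a + 1 - 1) =
      (1 - r)⁻¹ * (y / (1 - r)) ^ (m + a) := by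
    rw [rpow_add_one (by positivity), add_sub_cancel_right, div_eq_mul_inv,
      mul_rpow hy.le (by positivity)]
    ring
  have hsqrt : 2 * √(r * x * y) / (1 - r) / 2 = √(r * x * y) / (1 - r) := by ring
  rw [ProbabilityTheory.gammaPDFReal, if_pos hy.le, hexp, hsqrt, div_mul_eq_mul_div _ (Gamma _),
    hgamma, ← rpow_natCast]
  linear_combination (1 - r)⁻¹ * exp (-(r * x / (1 - r))) * exp (-((1 - r)⁻¹ * y)) /
    (m.factorial * Gamma (m + a + 1)) * hpow

lemma laguerreHeatFactor_nonneg (ha : -1 < a) (hx : 0 < x) (hr : r ∈ Ioo (0 : ℝ) 1)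
    (hy : 0 < y) : 0 ≤ laguerreHeatFactor a x r y := by
  have hq : 0 < 1 - r := sub_pos.2 hr.2
  have hr0 := hr.1
  rw [laguerreHeatFactor_eq_tsum a hx hr hy]
  refine tsum_nonneg fun m => mul_nonneg (by positivity) ?_
  exact ProbabilityTheory.gammaPDFReal_nonneg
    (by linarith [m.cast_nonneg (α := ℝ)]) (inv_pos.2 hq) y

lemma integral_laguerreHeatFactor (ha : -1 < a) (hx : 0 < x) (hr : r ∈ Ioo (0 : ℝ) 1) :
    ∫ y in Ioi (0 : ℝ), laguerreHeatFactor a x r y = 1 := by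
  have hr0 := hr.1
  have hr1 : 0 < 1 - r := sub_pos.2 hr.2
  have hq : 0 < (1 - r)⁻¹ := inv_pos.2 hr1
  have hshape : ∀ m : ℕ, 0 < m + a + 1 := fun m => by linarith [m.cast_nonneg (α := ℝ)]
  have hmean : 0 ≤ r * x / (1 - r) := by positivity
  set w : ℕ → ℝ := fun m => exp (-(r * x / (1 - r))) * (r * x / (1 - r)) ^ m / m.factorial
  set γ : ℕ → ℝ → ℝ := fun m => ProbabilityTheory.gammaPDFReal (m + a + 1) (1 - r)⁻¹
  have hpoisson : HasSum w 1 := ProbabilityTheory.hasSum_one_poissonMeasure ⟨_, hmean⟩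
  have hw : ∀ m, 0 ≤ w m := fun m => by positivity
  have hmass : ∀ m, ∫ y in Ioi (0 : ℝ), w m * γ m y = w m := fun m => by
    rw [integral_const_mul, integral_gammaPDFReal_Ioi (hshape m) hq, mul_one]
  have hnorm : ∀ m, ∫ y in Ioi (0 : ℝ), ‖w m * γ m y‖ = w m := fun m =>
    (integral_congr_ae (.of_forall fun y => norm_of_nonneg
      (mul_nonneg (hw m) (ProbabilityTheory.gammaPDFReal_nonneg (hshape m) hq y)))).trans (hmass m)
  have hsum : HasSum (fun m => ∫ y in Ioi (0 : ℝ), w m * γ m y)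
      (∫ y in Ioi (0 : ℝ), ∑' m, w m * γ m y) :=
    hasSum_integral_of_summable_integral_norm
      (fun m => (integrableOn_gammaPDFReal_Ioi (hshape m) hq).const_mul (w m))
      (hpoisson.summable.congr fun m => (hnorm m).symm)
  calc ∫ y in Ioi (0 : ℝ), laguerreHeatFactor a x r y
    _ = ∫ y in Ioi (0 : ℝ), ∑' m, w m * γ m y :=
        setIntegral_congr_fun measurableSet_Ioi fun y hy => laguerreHeatFactor_eq_tsum a hx hr hy
    _ = ∑' m, w m := by rw [← hsum.tsum_eq, tsum_congr hmass]
    _ = 1 := hpoisson.tsum_eq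

lemma integrableOn_laguerreHeatFactor (ha : -1 < a) (hx : 0 < x) (hr : r ∈ Ioo (0 : ℝ) 1) :
    IntegrableOn (laguerreHeatFactor a x r) (Ioi 0) :=
  .of_integral_ne_zero <| by
    rw [integral_laguerreHeatFactor ha hx hr]
    exact one_ne_zero

end LaguerreHeatFactor

section LaguerreHeatKernel

variable {d : ℕ} {α x : Fin d → ℝ} {r : ℝ}

/-- The `d`-dimensional Laguerre heat kernel at time `s = -log r`. -/
noncomputable def laguerreHeatKernel (α x : Fin d → ℝ) (r : ℝ) (y : Fin d → ℝ) : ℝ :=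
  ∏ j, laguerreHeatFactor (α j) (x j) r (y j)

lemma measurableSet_posOrthant (d : ℕ) : MeasurableSet (posOrthant d) :=
  .univ_pi fun _ => measurableSet_Ioi

lemma volume_restrict_posOrthant (d : ℕ) :
    volume.restrict (posOrthant d) = Measure.pi fun _ => volume.restrict (Ioi 0) := by
  rw [posOrthant, volume_pi, Measure.restrict_pi_pi]

lemma measurable_laguerreHeatKernel_exp_neg (α x : Fin d → ℝ) :
    Measurable fun p : ℝ × (Fin d → ℝ) => laguerreHeatKernel α x (exp (-p.1)) p.2 :=
  Finset.measurable_prod _ fun j _ =>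
    measurable_laguerreHeatFactor (α j) (x j) (by fun_prop) (by fun_prop)

lemma laguerreHeatKernel_nonneg (hα : ∀ j, -1 < α j) (hx : x ∈ posOrthant d)
    (hr : r ∈ Ioo (0 : ℝ) 1) {y : Fin d → ℝ} (hy : y ∈ posOrthant d) :
    0 ≤ laguerreHeatKernel α x r y :=
  Finset.prod_nonneg fun j _ =>
    laguerreHeatFactor_nonneg (hα j) (hx j (mem_univ j)) hr (hy j (mem_univ j))

lemma integrableOn_laguerreHeatKernel (hα : ∀ j, -1 < α j) (hx : x ∈ posOrthant d)
    (hr : r ∈ Ioo (0 : ℝ) 1) : IntegrableOn (laguerreHeatKernel α x r) (posOrthant d) := by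
  rw [IntegrableOn, volume_restrict_posOrthant]
  exact .fintype_prod_dep fun j => integrableOn_laguerreHeatFactor (hα j) (hx j (mem_univ j)) hr

lemma integral_laguerreHeatKernel (hα : ∀ j, -1 < α j) (hx : x ∈ posOrthant d)
    (hr : r ∈ Ioo (0 : ℝ) 1) : ∫ y in posOrthant d, laguerreHeatKernel α x r y = 1 := by
  simp only [laguerreHeatKernel, volume_restrict_posOrthant]
  rw [integral_fintype_prod_eq_prod]
  exact Finset.prod_eq_one fun j _ => integral_laguerreHeatFactor (hα j) (hx j (mem_univ j)) hr

end LaguerreHeatKernel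

section PoissonLaguerreKernel

variable {d : ℕ}

lemma exp_neg_mem_Ioo {s : ℝ} (hs : 0 < s) : exp (-s) ∈ Ioo (0 : ℝ) 1 :=
  ⟨exp_pos _, exp_lt_one_iff.2 (neg_lt_zero.2 hs)⟩

lemma integral_comp_exp_neg_Ioi {E : Type*} [NormedAddCommGroup E] [NormedSpace ℝ E] (g : ℝ → E) :
    ∫ s in Ioi (0 : ℝ), g (exp (-s)) = ∫ r in Ioo (0 : ℝ) 1, r⁻¹ • g r := by
  have himage : (fun s => exp (-s)) '' Ioi 0 = Ioo 0 1 := by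
    refine Subset.antisymm (image_subset_iff.2 fun s hs => exp_neg_mem_Ioo hs) ?_
    rintro r ⟨hr0, hr1⟩
    exact ⟨-log r, neg_pos.2 (log_neg hr0 hr1), by simp [exp_log hr0]⟩
  rw [← himage, integral_image_eq_integral_abs_deriv_smul measurableSet_Ioi
    (fun s _ => (hasDerivAt_neg s).exp.hasDerivWithinAt)
    (exp_injective.comp neg_injective).injOn]
  simp [smul_smul]

lemma plKernel_eq_integral_levyDensity_mul (α : Fin d → ℝ) (t : ℝ) (x y : Fin d → ℝ) :
    plKernel d α t x y =
      ∫ s in Ioi (0 : ℝ), levyDensity t s * laguerreHeatKernel α x (exp (-s)) y := by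
  have hsubst := integral_comp_exp_neg_Ioi fun r =>
    levyDensity t (-log r) * laguerreHeatKernel α x r y
  simp only [log_exp, neg_neg] at hsubst
  rw [hsubst, plKernel, ← integral_const_mul]
  refine setIntegral_congr_fun measurableSet_Ioo fun r hr => ?_
  have hlog : 0 ≤ -log r := (neg_pos.2 (log_neg hr.1 hr.2)).le
  have hexp : t ^ 2 / (4 * log r) = -(t ^ 2 / (4 * -log r)) := by
    rw [mul_neg, div_neg, neg_neg]
  simp only [levyDensity, laguerreHeatKernel, laguerreHeatFactor, Finset.prod_mul_distrib,
    Finset.prod_const, Finset.card_univ, Fintype.card_fin, smul_eq_mul, hexp, rpow_neg hlog,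
    inv_pow]
  ring

end PoissonLaguerreKernel

theorem laguerre_poisson_kernel_deriv_L1_mixed_region_general
    {d : ℕ} {α x : Fin d → ℝ} (hα : ∀ j, -1 < α j) (hx : x ∈ posOrthant d) {t : ℝ} (ht : 0 < t) :
    IntegrableOn (fun y => deriv (fun u => plKernel d α u x y) t) (posOrthant d) ∧
      ∫ y in posOrthant d, |deriv (fun u => plKernel d α u x y) t| ≤ 2 / t := by
  have hmeas := (measurable_laguerreHeatKernel_exp_neg α x).aestronglyMeasurable
    (μ := (volume.restrict (Ioi 0)).prod (volume.restrict (posOrthant d)))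
  have hint : ∀ s > 0, IntegrableOn (laguerreHeatKernel α x (exp (-s))) (posOrthant d) :=
    fun s hs => integrableOn_laguerreHeatKernel hα hx (exp_neg_mem_Ioo hs)
  have hmass : ∀ s > 0, ∫ y in posOrthant d, |laguerreHeatKernel α x (exp (-s)) y| ≤ 1 := by
    intro s hs
    rw [← integral_laguerreHeatKernel hα hx (exp_neg_mem_Ioo hs)]
    exact (setIntegral_congr_fun (measurableSet_posOrthant d) fun y hy =>
      abs_of_nonneg (laguerreHeatKernel_nonneg hα hx (exp_neg_mem_Ioo hs) hy)).le
  simp only [plKernel_eq_integral_levyDensity_mul]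
  exact ⟨integrable_deriv_integral_levyDensity_mul ht hmeas hint hmass,
    (integral_abs_deriv_integral_levyDensity_mul_le ht hmeas hint hmass).trans_eq (mul_one _)⟩

theorem laguerre_poisson_kernel_deriv_L1_mixed_region
    (d : ℕ) (hd : 1 ≤ d) (k : ℕ) (hk : k ≤ d) (α : Fin d → ℝ)
    (hα₁ : ∀ j : Fin d, (j : ℕ) < k → -1 < α j)
    (hα₂ : ∀ j : Fin d, k ≤ (j : ℕ) → -(1 / 2 : ℝ) < α j) :
    ∃ C > 0, ∀ t > (0 : ℝ), ∀ x ∈ posOrthant d,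
      (∫ y in {y : Fin d → ℝ | (∀ j, 0 < y j) ∧
          (∀ j : Fin d, (j : ℕ) < k →
            Real.sqrt (Real.exp (-t) * x j * y j) ≤ 1 - Real.exp (-t)) ∧
          (∀ j : Fin d, k ≤ (j : ℕ) →
            1 - Real.exp (-t) < Real.sqrt (Real.exp (-t) * x j * y j))},
        |deriv (fun u => plKernel d α u x y) t|) ≤ C / t := by
  have hα : ∀ j, -1 < α j := fun j =>
    (lt_or_ge (j : ℕ) k).elim (hα₁ j) fun hj => by linarith [hα₂ j hj]
  refine ⟨2, two_pos, fun t ht x hx => ?_⟩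
  obtain ⟨hint, hle⟩ := laguerre_poisson_kernel_deriv_L1_mixed_region_general hα hx ht
  exact (setIntegral_mono_set hint.abs (.of_forall fun _ => abs_nonneg _)
    (.of_forall fun y hy j _ => hy.1 j)).trans hle
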